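/- (AGM inequality) For all m×m positive definite complex matrices A and B, 2(A^{-1} + B^{-1})^{-1} ≤ A # B ≤ (1/2)(A + B) in the Loewner order. -/

import Mathlib

/-!
Put `S = A^{1/2}` and `T = (S⁻¹ B S⁻¹)^{1/2}`, both positive definite, so that `A = S S`,
`B = S T T S` and `A # B = S T S`. Both bounds are then congruences by `S` of one-variable
inequalities in `T`, each coming from an explicit factorization:

* `(A + B)/2 - A # B = (1/2) S (1 - T)² S`;
* with `P = (T + T⁻¹)⁻¹`, which is positive definite and commutes with `T`, one has
  `(A⁻¹ + B⁻¹)⁻¹ = S T P S` and `A # B - 2 (A⁻¹ + B⁻¹)⁻¹ = S (1 - T) P (1 - T) S`.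
-/

open Matrix
open scoped ComplexOrder

noncomputable def matFun {m : ℕ} (f : ℝ → ℝ) (A : Matrix (Fin m) (Fin m) ℂ) :
    Matrix (Fin m) (Fin m) ℂ :=
  if hA : A.IsHermitian then
    (hA.eigenvectorUnitary : Matrix (Fin m) (Fin m) ℂ) *
      Matrix.diagonal (fun i => (f (hA.eigenvalues i) : ℂ)) *
      (star (hA.eigenvectorUnitary : Matrix (Fin m) (Fin m) ℂ))
  else 0

/-- The unique positive definite square root of a positive definite matrix
(realized via the spectral decomposition). -/
noncomputable def msqrt {m : ℕ} (A : Matrix (Fin m) (Fin m) ℂ) : Matrix (Fin m) (Fin m) ℂ :=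
  matFun Real.sqrt A

/-- The logarithm of a positive definite matrix: the unique Hermitian `L` with `exp L = A`. -/
noncomputable def mlog {m : ℕ} (A : Matrix (Fin m) (Fin m) ℂ) : Matrix (Fin m) (Fin m) ℂ :=
  matFun Real.log A

/-- The real power `A ^ t` of a positive definite matrix, via the spectral decomposition. -/
noncomputable def mpow {m : ℕ} (A : Matrix (Fin m) (Fin m) ℂ) (t : ℝ) : Matrix (Fin m) (Fin m) ℂ :=
  matFun (fun x => x ^ t) A

/-- The matrix geometric mean `A # B`. -/
noncomputable def gmean {m : ℕ} (A B : Matrix (Fin m) (Fin m) ℂ) : Matrix (Fin m) (Fin m) ℂ :=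
  msqrt A * msqrt ((msqrt A)⁻¹ * B * (msqrt A)⁻¹) * msqrt A

/-- The weighted geometric mean `A #_t B`. -/
noncomputable def wgmean {m : ℕ} (A B : Matrix (Fin m) (Fin m) ℂ) (t : ℝ) :
    Matrix (Fin m) (Fin m) ℂ :=
  msqrt A * mpow ((msqrt A)⁻¹ * B * (msqrt A)⁻¹) t * msqrt A

/-- The Frobenius (Hilbert–Schmidt) norm `‖X‖₂ = (Tr(X*X))^{1/2}`. -/
noncomputable def fnorm {m : ℕ} (X : Matrix (Fin m) (Fin m) ℂ) : ℝ :=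
  Real.sqrt ((Xᴴ * X).trace.re)

/-- The Riemannian metric `δ(A,B) = ‖log(A^{-1/2} B A^{-1/2})‖₂`. -/
noncomputable def rdist {m : ℕ} (A B : Matrix (Fin m) (Fin m) ℂ) : ℝ :=
  fnorm (mlog ((msqrt A)⁻¹ * B * (msqrt A)⁻¹))

/-- The Loewner order: `A ≤ B` iff `B - A` is positive semidefinite. -/
def Loewner {m : ℕ} (A B : Matrix (Fin m) (Fin m) ℂ) : Prop :=
  (B - A).PosSemidef

lemma msqrt_mul_self {m : ℕ} {A : Matrix (Fin m) (Fin m) ℂ} (hA : A.PosDef) :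
    msqrt A * msqrt A = A := by
  have hu : star (hA.1.eigenvectorUnitary : Matrix (Fin m) (Fin m) ℂ) *
      (hA.1.eigenvectorUnitary : Matrix (Fin m) (Fin m) ℂ) = 1 :=
    Unitary.coe_star_mul_self _
  have hs := hA.1.spectral_theorem
  rw [Unitary.conjStarAlgAut_apply] at hs
  conv_rhs => rw [hs]
  unfold msqrt matFun
  rw [dif_pos hA.1]
  simp only [Matrix.mul_assoc]
  rw [← Matrix.mul_assoc (star _) (hA.1.eigenvectorUnitary : Matrix (Fin m) (Fin m) ℂ), hu,
    Matrix.one_mul, ← Matrix.mul_assoc (diagonal _) (diagonal _), diagonal_mul_diagonal]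
  congr 3
  ext i
  simp only [Function.comp]
  rw [← Complex.ofReal_mul, Real.mul_self_sqrt (hA.eigenvalues_pos i).le]
  rfl

lemma msqrt_posDef {m : ℕ} {A : Matrix (Fin m) (Fin m) ℂ} (hA : A.PosDef) :
    (msqrt A).PosDef := by
  have hd : (diagonal fun i => ((Real.sqrt (hA.1.eigenvalues i) : ℝ) : ℂ)).PosDef :=
    Matrix.PosDef.diagonal fun i => by
      exact_mod_cast Real.sqrt_pos.2 (hA.eigenvalues_pos i)
  have hpsd : (msqrt A).PosSemidef := by
    unfold msqrt matFun
    rw [dif_pos hA.1]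
    exact hd.posSemidef.mul_mul_conjTranspose_same _
  -- A positive semidefinite matrix whose square is invertible is itself invertible.
  refine hpsd.posDef_iff_isUnit.2 ?_
  have h := hA.isUnit
  rw [← msqrt_mul_self hA] at h
  exact isUnit_of_mul_isUnit_left h

/-- The upper bound in the coordinates `A = S S`, `B = S T T S`. -/
lemma arithmetic_gap {m : ℕ} {S T : Matrix (Fin m) (Fin m) ℂ}
    (hS : S.PosDef) (hT : T.PosDef) :
    (((1 : ℂ) / 2) • (S * S + S * (T * T) * S) - S * T * S).PosSemidef := by
  have h : ((1 : ℂ) / 2) • (S * S + S * (T * T) * S) - S * T * S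
      = ((1 : ℂ) / 2) • (((1 - T) * S)ᴴ * ((1 - T) * S)) := by
    have e : ((1 - T) * S)ᴴ * ((1 - T) * S)
        = (S * S + S * (T * T) * S) - (2 : ℂ) • (S * T * S) := by
      rw [conjTranspose_mul, conjTranspose_sub, conjTranspose_one, hS.1.eq, hT.1.eq, two_smul]
      noncomm_ring
    rw [e, smul_sub, smul_smul]
    norm_num
  rw [h]
  refine (posSemidef_conjTranspose_mul_self _).smul ?_
  rw [one_div, inv_nonneg]
  exact zero_le_two

/-- The lower bound in the coordinates `A = S S`, `B = S T T S`. -/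
lemma harmonic_gap {m : ℕ} {S T : Matrix (Fin m) (Fin m) ℂ}
    (hS : S.PosDef) (hT : T.PosDef) :
    (S * T * S - (2 : ℂ) • ((S * S)⁻¹ + (S * (T * T) * S)⁻¹)⁻¹).PosSemidef := by
  have hS' : IsUnit S.det := (isUnit_iff_isUnit_det _).1 hS.isUnit
  have hT' : IsUnit T.det := (isUnit_iff_isUnit_det _).1 hT.isUnit
  have hK : (T + T⁻¹).PosDef := hT.add hT.inv
  have hK' : IsUnit (T + T⁻¹).det := (isUnit_iff_isUnit_det _).1 hK.isUnit
  have hP := hK.inv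
  have hKP := mul_nonsing_inv _ hK'
  have hPK := nonsing_inv_mul _ hK'
  have hTQ := mul_nonsing_inv _ hT'
  have hQT := nonsing_inv_mul _ hT'
  have hRS := nonsing_inv_mul _ hS'
  set P := (T + T⁻¹)⁻¹
  have hTK : T * (T + T⁻¹) = (T + T⁻¹) * T := by
    rw [mul_add, add_mul, hTQ, hQT]
  have hTP : T * P = P * T := by
    calc T * P = P * (T + T⁻¹) * (T * P) := by rw [hPK, one_mul]
      _ = P * ((T + T⁻¹) * T) * P := by noncomm_ring
      _ = P * T * ((T + T⁻¹) * P) := by rw [← hTK]; noncomm_ring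
      _ = P * T := by rw [hKP, mul_one]
  have hinv : ((S * S)⁻¹ + (S * (T * T) * S)⁻¹)⁻¹ = S * (T * P) * S := by
    apply inv_eq_right_inv
    simp only [Matrix.mul_inv_rev]
    calc (S⁻¹ * S⁻¹ + S⁻¹ * (T⁻¹ * T⁻¹ * S⁻¹)) * (S * (T * P) * S)
        = S⁻¹ * (S⁻¹ * S) * T * P * S
          + S⁻¹ * T⁻¹ * T⁻¹ * (S⁻¹ * S) * T * P * S := by noncomm_ring
      _ = S⁻¹ * T * P * S + S⁻¹ * T⁻¹ * (T⁻¹ * T) * P * S := by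
          rw [hRS]; noncomm_ring
      _ = S⁻¹ * ((T + T⁻¹) * P) * S := by rw [hQT]; noncomm_ring
      _ = 1 := by rw [hKP, mul_one, hRS]
  have hmid : T = P + P * T * T := by
    calc T = P * (T + T⁻¹) * T := by rw [hPK, one_mul]
      _ = P * T * T + P * (T⁻¹ * T) := by noncomm_ring
      _ = P + P * T * T := by rw [hQT, mul_one, add_comm]
  have h : S * T * S - (2 : ℂ) • (S * (T * P) * S)
      = ((1 - T) * S)ᴴ * P * ((1 - T) * S) := by
    rw [conjTranspose_mul, conjTranspose_sub, conjTranspose_one, hS.1.eq, hT.1.eq, two_smul]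
    calc S * T * S - (S * (T * P) * S + S * (T * P) * S)
        = S * (P + P * T * T) * S - (S * (T * P) * S + S * (P * T) * S) := by
          rw [← hmid, ← hTP]
      _ = S * (P + (T * P) * T) * S - (S * (T * P) * S + S * (P * T) * S) := by rw [hTP]
      _ = _ := by noncomm_ring
  rw [hinv, h]
  exact hP.posSemidef.conjTranspose_mul_mul_same _

/-- The AGM inequality: `2(A⁻¹ + B⁻¹)⁻¹ ≤ A # B ≤ (1/2)(A + B)` in the Loewner order. -/
theorem gmean_agm_inequality {m : ℕ} (A B : Matrix (Fin m) (Fin m) ℂ)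
    (hA : A.PosDef) (hB : B.PosDef) :
    Loewner ((2 : ℂ) • (A⁻¹ + B⁻¹)⁻¹) (gmean A B) ∧
      Loewner (gmean A B) (((1 : ℂ) / 2) • (A + B)) := by
  have hS := msqrt_posDef hA
  have hSS := msqrt_mul_self hA
  have hS' : IsUnit (msqrt A).det := (isUnit_iff_isUnit_det _).1 hS.isUnit
  have hC : ((msqrt A)⁻¹ * B * (msqrt A)⁻¹).PosDef := by
    have h := hB.conjTranspose_mul_mul_same (B := (msqrt A)⁻¹)
      (mulVec_injective_of_isUnit hS.inv.isUnit)
    rwa [hS.inv.1.eq] at h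
  have hT := msqrt_posDef hC
  have hTT := msqrt_mul_self hC
  have hBeq : msqrt A * (msqrt ((msqrt A)⁻¹ * B * (msqrt A)⁻¹) *
      msqrt ((msqrt A)⁻¹ * B * (msqrt A)⁻¹)) * msqrt A = B := by
    rw [hTT]
    calc msqrt A * ((msqrt A)⁻¹ * B * (msqrt A)⁻¹) * msqrt A
        = (msqrt A * (msqrt A)⁻¹) * B * ((msqrt A)⁻¹ * msqrt A) := by noncomm_ring
      _ = B := by rw [mul_nonsing_inv _ hS', nonsing_inv_mul _ hS', one_mul, mul_one]
  have h1 := harmonic_gap hS hT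
  have h2 := arithmetic_gap hS hT
  rw [hBeq, hSS] at h1 h2
  exact ⟨h1, h2⟩
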